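/- Let k₁ ≠ k₂ be nonzero integers and let D be a triangle in the complex plane with vertices 0, 1, and (k₂/(k₂-k₁))(1+k₁ i), whose boundary edges C₀, C₁, C₂ have slopes 0, k₁, k₂ respectively. If ξ is a holomorphic function on a neighborhood of D satisfying the linear boundary conditions conj(ξ) = ξ on C₀, conj(ξ) = μ₁ ξ on C₁, and conj(ξ) = μ₂ ξ on C₂, where μⱼ = (1-kⱼi)/(1+kⱼi), then ξ is identically zero. -/

import Mathlib

open Complex

/-- real derivative of the normalized imaginary part along a segment -/
lemma xi_aux_deriv (ξ : ℂ → ℂ) (U : Set ℂ) (hU : IsOpen U) (hξ : DifferentiableOn ℂ ξ U)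
    (p d : ℂ) (hd : d ≠ 0) (t : ℝ) (ht : p + t * d ∈ U) :
    HasDerivAt (fun s : ℝ => (ξ (p + s * d) / d).im) ((deriv ξ (p + t * d)).im) t := by
  have h1 : HasDerivAt ξ (deriv ξ (p + t * d)) (p + (t : ℂ) * d) :=
    (hξ.differentiableAt (hU.mem_nhds ht)).hasDerivAt
  have h2 : HasDerivAt (fun s : ℂ => p + s * d) d (t : ℂ) := by
    simpa using ((hasDerivAt_id (t : ℂ)).mul_const d).const_add p
  have h3 : HasDerivAt (fun s : ℂ => ξ (p + s * d) / d) (deriv ξ (p + t * d)) (t : ℂ) := by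
    have := (HasDerivAt.comp (t : ℂ) h1 h2).div_const d
    rw [mul_div_assoc, div_self hd, mul_one] at this
    exact this
  have h4 := h3.comp_ofReal
  have h5 := (Complex.imCLM.hasFDerivAt.comp_hasDerivAt t h4)
  exact h5

lemma xi_aux_edge (ξ : ℂ → ℂ) (U : Set ℂ) (hU : IsOpen U) (hξ : DifferentiableOn ℂ ξ U)
    (p d : ℂ) (hd : d ≠ 0) (hs : ∀ t ∈ Set.Icc (0 : ℝ) 1, p + t * d ∈ U)
    (hr : ∀ t ∈ Set.Icc (0 : ℝ) 1, (ξ (p + t * d) / d).im = 0) :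
    ∀ t ∈ Set.Icc (0 : ℝ) 1, (deriv ξ (p + t * d)).im = 0 := by
  intro t ht
  have h1 := (xi_aux_deriv ξ U hU hξ p d hd t (hs t ht)).hasDerivWithinAt (s := Set.Icc 0 1)
  have h2 : HasDerivWithinAt (fun s : ℝ => (ξ (p + s * d) / d).im) 0 (Set.Icc 0 1) t :=
    (hasDerivWithinAt_const t (Set.Icc (0 : ℝ) 1) (0 : ℝ)).congr hr (hr t ht)
  exact ((uniqueDiffOn_Icc (zero_lt_one' ℝ)) t ht).eq_deriv _ h1 h2

lemma xi_aux_int (ξ : ℂ → ℂ) (U : Set ℂ) (hU : IsOpen U) (hξ : DifferentiableOn ℂ ξ U)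
    (p d : ℂ) (hd : d ≠ 0) (hs : ∀ t ∈ Set.Icc (0 : ℝ) 1, p + t * d ∈ U)
    (h0 : ξ p = 0)
    (hr : ∀ t ∈ Set.Icc (0 : ℝ) 1, (deriv ξ (p + t * d)).im = 0) :
    (ξ (p + d) / d).im = 0 := by
  have key := constant_of_has_deriv_right_zero
    (f := fun s : ℝ => (ξ (p + s * d) / d).im) (a := 0) (b := 1)
    (fun t ht => (xi_aux_deriv ξ U hU hξ p d hd t (hs t ht)).continuousAt.continuousWithinAt)
    (fun t ht => by
      have := (xi_aux_deriv ξ U hU hξ p d hd t (hs t ⟨ht.1, ht.2.le⟩))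
      rw [hr t ⟨ht.1, ht.2.le⟩] at this
      exact this.hasDerivWithinAt)
    1 ⟨zero_le_one, le_rfl⟩
  simpa [h0] using key

lemma xi_aux_conj (k : ℤ) (r : ℝ) (w d : ℂ) (hd : d = r * (1 + (k : ℂ) * Complex.I))
    (h : (starRingEnd ℂ) w = ((1 - (k : ℂ) * Complex.I) / (1 + (k : ℂ) * Complex.I)) * w) :
    (w / d).im = 0 := by
  have hk : (1 + (k : ℂ) * Complex.I) ≠ 0 := by
    intro h; simpa using congrArg Complex.re h
  have hk' : (1 - (k : ℂ) * Complex.I) ≠ 0 := by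
    intro h; simpa using congrArg Complex.re h
  rw [← Complex.conj_eq_iff_im, map_div₀, h, hd]
  simp only [map_mul, map_add, map_one, Complex.conj_ofReal, Complex.conj_I, map_intCast]
  rw [mul_neg, ← sub_eq_add_neg]
  by_cases hr : (r : ℂ) = 0
  · simp [hr]
  · field_simp

/-- If `w` is a real multiple of two independent directions it vanishes. -/
lemma xi_aux_zero (w d e : ℂ) (hd : d ≠ 0) (he : e ≠ 0) (h1 : (w / d).im = 0)
    (h2 : (w / e).im = 0) (hde : d.re * e.im - d.im * e.re ≠ 0) : w = 0 := by
  obtain ⟨a, ha⟩ : ∃ a : ℝ, w = a * d :=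
    ⟨(w / d).re, by
      have : ((w / d).re : ℂ) = w / d := Complex.ext (by simp) (by simp [h1])
      rw [this, div_mul_cancel₀ _ hd]⟩
  obtain ⟨b, hb⟩ : ∃ b : ℝ, w = b * e :=
    ⟨(w / e).re, by
      have : ((w / e).re : ℂ) = w / e := Complex.ext (by simp) (by simp [h2])
      rw [this, div_mul_cancel₀ _ he]⟩
  have hre : a * d.re = b * e.re := by simpa using congrArg Complex.re (ha.symm.trans hb)
  have him : a * d.im = b * e.im := by simpa using congrArg Complex.im (ha.symm.trans hb)
  have : a * (d.re * e.im - d.im * e.re) = 0 := by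
    linear_combination e.im * hre - e.re * him
  have ha0 : a = 0 := by simpa [hde] using this
  simp [ha, ha0]

/-- Maximum principle on a triangle: if the imaginary part vanishes on the edges, it vanishes. -/
lemma xi_aux_max (g : ℂ → ℂ) (v : ℂ) (hv : v.im ≠ 0)
    (hg : ∀ a b : ℝ, 0 ≤ a → 0 ≤ b → a + b ≤ 1 → DifferentiableAt ℂ g (a + b * v))
    (h0 : ∀ a b : ℝ, 0 ≤ a → 0 ≤ b → a + b ≤ 1 → (a = 0 ∨ b = 0 ∨ a + b = 1) →
      (g (a + b * v)).im = 0) :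
    ∀ a b : ℝ, 0 ≤ a → 0 ≤ b → a + b ≤ 1 → (g (a + b * v)).im = 0 := by
  intro a b ha hb hab
  by_cases hE : a = 0 ∨ b = 0 ∨ a + b = 1
  · exact h0 a b ha hb hab hE
  push Not at hE
  let B : ℂ → ℝ := fun z => z.im / v.im
  let A : ℂ → ℝ := fun z => z.re - z.im / v.im * v.re
  have hB : Continuous B := by fun_prop
  have hA : Continuous A := by fun_prop
  have hz : ∀ z, z = (A z : ℂ) + B z * v := by
    intro z
    apply Complex.ext
    · simp [A, B]
    · simp [A, B, hv]
  have hAz : ∀ a b : ℝ, A (a + b * v) = a := by intro a b; simp [A, hv]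
  have hBz : ∀ a b : ℝ, B (a + b * v) = b := by intro a b; simp [B, hv]
  let T : Set ℂ := {z | 0 < A z} ∩ ({z | 0 < B z} ∩ {z | A z + B z < 1})
  let D : Set ℂ := {z | 0 ≤ A z} ∩ ({z | 0 ≤ B z} ∩ {z | A z + B z ≤ 1})
  have hTo : IsOpen T := (isOpen_lt continuous_const hA).inter
    ((isOpen_lt continuous_const hB).inter (isOpen_lt (hA.add hB) continuous_const))
  have hDc : IsClosed D := (isClosed_le continuous_const hA).inter
    ((isClosed_le continuous_const hB).inter (isClosed_le (hA.add hB) continuous_const))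
  have hTD : T ⊆ D := fun z hz => ⟨(show 0 < A z from hz.1).le,
    (show 0 < B z from hz.2.1).le, (show A z + B z < 1 from hz.2.2).le⟩
  have hcl : closure T ⊆ D := closure_minimal hTD hDc
  have hDb : Bornology.IsBounded D := by
    refine (Metric.isBounded_closedBall (x := (0 : ℂ)) (r := 1 + ‖v‖)).subset ?_
    rintro z ⟨h1, h2, h3⟩
    simp only [Set.mem_setOf_eq] at h1 h2 h3
    rw [mem_closedBall_zero_iff, hz z]
    refine (norm_add_le _ _).trans ?_
    rw [norm_mul, Complex.norm_real, Complex.norm_real, Real.norm_of_nonneg h1,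
      Real.norm_of_nonneg h2]
    have := norm_nonneg v
    nlinarith
  have hfr : ∀ z ∈ frontier T, (g z).im = 0 := by
    intro z hzf
    rw [hTo.frontier_eq] at hzf
    obtain ⟨h1, h2, h3⟩ := hcl hzf.1
    simp only [Set.mem_setOf_eq] at h1 h2 h3
    have hnT := hzf.2
    rw [hz z]
    apply h0 _ _ h1 h2 h3
    by_contra hcon
    push Not at hcon
    exact hnT ⟨lt_of_le_of_ne h1 (Ne.symm hcon.1), lt_of_le_of_ne h2 (Ne.symm hcon.2.1),
      lt_of_le_of_ne h3 hcon.2.2⟩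
  have hgd : ∀ z ∈ closure T, DifferentiableAt ℂ g z := by
    intro z hzc
    obtain ⟨h1, h2, h3⟩ := hcl hzc
    rw [hz z]
    exact hg _ _ h1 h2 h3
  have hmem : ((a : ℂ) + b * v) ∈ T := by
    refine ⟨?_, ?_, ?_⟩
    · simp only [Set.mem_setOf_eq, hAz]; exact lt_of_le_of_ne ha (Ne.symm hE.1)
    · simp only [Set.mem_setOf_eq, hBz]; exact lt_of_le_of_ne hb (Ne.symm hE.2.1)
    · simp only [Set.mem_setOf_eq, hAz, hBz]; exact lt_of_le_of_ne hab hE.2.2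
  have hmax : ∀ c : ℝ, 0 ≤ c * (g (a + b * v)).im := by
    intro c
    have hd : DifferentiableOn ℂ (fun z => Complex.exp (c * Complex.I * g z)) (closure T) := by
      intro z hz
      exact (((hgd z hz).const_mul (c * Complex.I)).cexp).differentiableWithinAt
    have := Complex.norm_le_of_forall_mem_frontier_norm_le (hDb.subset hTD) hd.diffContOnCl
      (C := 1) (fun z hz => by
        rw [Complex.norm_exp]
        simp [hfr z hz]) (subset_closure hmem)
    rw [Complex.norm_exp, Real.exp_le_one_iff] at this
    simp only [Complex.mul_re, Complex.mul_im, Complex.ofReal_re, Complex.ofReal_im,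
      Complex.I_re, Complex.I_im] at this
    linarith
  have := hmax 1
  have := hmax (-1)
  linarith


/-- Let `k₁ ≠ k₂` be nonzero integers and let `D` be the triangle in `ℂ` with
vertices `0`, `1` and `v = (k₂/(k₂-k₁))(1 + k₁ i)`, whose edges `C₀, C₁, C₂`
have slopes `0, k₁, k₂`.  If `ξ` is holomorphic on a neighborhood of `D` and
satisfies `conj ξ = ξ` on `C₀`, `conj ξ = μ₁ ξ` on `C₁`, `conj ξ = μ₂ ξ` on
`C₂`, where `μⱼ = (1 - kⱼ i)/(1 + kⱼ i)`, then `ξ` vanishes identically on `D`. -/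
theorem xi_vanishes_on_triangle
    (k₁ k₂ : ℤ) (hk₁ : k₁ ≠ 0) (hk₂ : k₂ ≠ 0) (hne : k₁ ≠ k₂)
    (ξ : ℂ → ℂ) (U : Set ℂ) (hU : IsOpen U)
    (v : ℂ) (hv : v = ((k₂ : ℂ) / ((k₂ : ℂ) - (k₁ : ℂ))) * (1 + (k₁ : ℂ) * Complex.I))
    (hDU : convexHull ℝ {(0 : ℂ), 1, v} ⊆ U)
    (hξ : DifferentiableOn ℂ ξ U)
    (hC0 : ∀ z ∈ segment ℝ (0 : ℂ) 1, (starRingEnd ℂ) (ξ z) = ξ z)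
    (hC1 : ∀ z ∈ segment ℝ (0 : ℂ) v,
      (starRingEnd ℂ) (ξ z) =
        ((1 - (k₁ : ℂ) * Complex.I) / (1 + (k₁ : ℂ) * Complex.I)) * ξ z)
    (hC2 : ∀ z ∈ segment ℝ (1 : ℂ) v,
      (starRingEnd ℂ) (ξ z) =
        ((1 - (k₂ : ℂ) * Complex.I) / (1 + (k₂ : ℂ) * Complex.I)) * ξ z) :
    ∀ z ∈ convexHull ℝ {(0 : ℂ), 1, v}, ξ z = 0 := by
  have hk₁R : (k₁ : ℝ) ≠ 0 := by exact_mod_cast hk₁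
  have hk₂R : (k₂ : ℝ) ≠ 0 := by exact_mod_cast hk₂
  have hR : (k₂ : ℝ) - k₁ ≠ 0 := sub_ne_zero.2 (by exact_mod_cast hne.symm)
  have hC : (k₂ : ℂ) - k₁ ≠ 0 := sub_ne_zero.2 (by exact_mod_cast hne.symm)
  have hv1 : v = ((k₂ / (k₂ - k₁) : ℝ) : ℂ) * (1 + (k₁ : ℂ) * Complex.I) := by
    rw [hv]; push_cast; rfl
  have hv2 : v - 1 = ((k₁ / (k₂ - k₁) : ℝ) : ℂ) * (1 + (k₂ : ℂ) * Complex.I) := by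
    rw [hv]; push_cast; field_simp; ring
  have hvim : v.im ≠ 0 := by
    have : v.im = k₂ / (k₂ - k₁) * k₁ := by rw [hv1, Complex.im_ofReal_mul]; simp
    rw [this]
    exact mul_ne_zero (div_ne_zero hk₂R hR) hk₁R
  have hv0 : v ≠ 0 := by rintro h; simp [h] at hvim
  have hv10 : v - 1 ≠ 0 := by intro h; apply hvim; simpa using congrArg Complex.im h
  have hD : ∀ a b : ℝ, 0 ≤ a → 0 ≤ b → a + b ≤ 1 →
      ((a : ℂ) + b * v) ∈ convexHull ℝ {(0 : ℂ), 1, v} := by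
    intro a b ha hb hab
    rw [convexHull_insert (by simp), convexHull_pair, mem_convexJoin]
    rcases eq_or_lt_of_le (add_nonneg ha hb) with h | h
    · refine ⟨0, rfl, 1, left_mem_segment _ _ _, ?_⟩
      have h1 : a = 0 := by linarith
      have h2 : b = 0 := by linarith
      simp [h1, h2, left_mem_segment]
    · refine ⟨0, rfl, ((a / (a + b) : ℝ) : ℂ) + ((b / (a + b) : ℝ) : ℂ) * v,
        ⟨a / (a + b), b / (a + b), by positivity, by positivity, by field_simp, by simp⟩,
        ⟨1 - (a + b), a + b, by linarith, h.le, by ring, ?_⟩⟩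
      have h' : (a : ℂ) + b ≠ 0 := by exact_mod_cast h.ne'
      simp only [smul_zero, zero_add, Complex.real_smul]
      push_cast
      field_simp
  have hDinv : ∀ z ∈ convexHull ℝ {(0 : ℂ), 1, v}, ∃ a b : ℝ, 0 ≤ a ∧ 0 ≤ b ∧ a + b ≤ 1 ∧
      z = (a : ℂ) + b * v := by
    intro z hz
    rw [convexHull_insert (by simp), convexHull_pair, mem_convexJoin] at hz
    obtain ⟨x, hx, y, ⟨s, t, hs, ht, hst, rfl⟩, ⟨c, e, hc, he, hce, rfl⟩⟩ := hz
    rw [Set.mem_singleton_iff.1 hx]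
    refine ⟨e * s, e * t, by positivity, by positivity, ?_, ?_⟩
    · rw [← mul_add, hst]; linarith
    · simp only [smul_zero, zero_add, Complex.real_smul]; push_cast; ring
  have hDU' : ∀ a b : ℝ, 0 ≤ a → 0 ≤ b → a + b ≤ 1 → ((a : ℂ) + b * v) ∈ U :=
    fun a b ha hb hab => hDU (hD a b ha hb hab)
  -- tangency along the edges
  have e0 : ∀ t ∈ Set.Icc (0 : ℝ) 1, (ξ (0 + t * 1) / 1).im = 0 := by
    intro t ht
    rw [div_one, ← Complex.conj_eq_iff_im]
    exact hC0 _ ⟨1 - t, t, by linarith [ht.2], ht.1, by ring, by simp⟩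
  have e1 : ∀ t ∈ Set.Icc (0 : ℝ) 1, (ξ (0 + t * v) / v).im = 0 := by
    intro t ht
    exact xi_aux_conj k₁ _ _ _ hv1
      (hC1 _ ⟨1 - t, t, by linarith [ht.2], ht.1, by ring, by simp⟩)
  have e2 : ∀ t ∈ Set.Icc (0 : ℝ) 1, (ξ (1 + t * (v - 1)) / (v - 1)).im = 0 := by
    intro t ht
    exact xi_aux_conj k₂ _ _ _ hv2
      (hC2 _ ⟨1 - t, t, by linarith [ht.2], ht.1, by ring, by
        simp only [Complex.real_smul]; push_cast; ring⟩)
  have m0 : (0 : ℝ) ∈ Set.Icc (0 : ℝ) 1 := ⟨le_rfl, zero_le_one⟩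
  have m1 : (1 : ℝ) ∈ Set.Icc (0 : ℝ) 1 := ⟨zero_le_one, le_rfl⟩
  -- vanishing at the vertices
  have z0 : ξ 0 = 0 := xi_aux_zero _ 1 v one_ne_zero hv0 (by simpa using e0 0 m0)
    (by simpa using e1 0 m0) (by simpa using hvim)
  have z1 : ξ 1 = 0 := xi_aux_zero _ 1 (v - 1) one_ne_zero hv10 (by simpa using e0 1 m1)
    (by simpa using e2 0 m0) (by simpa using hvim)
  have zv : ξ v = 0 := xi_aux_zero _ v (v - 1) hv0 hv10 (by simpa using e1 1 m1)
    (by simpa using e2 1 m1) (by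
      simp only [Complex.sub_re, Complex.sub_im, Complex.one_re, Complex.one_im]
      intro h; apply hvim; linarith)
  -- real derivative on the edges
  have d0 := xi_aux_edge ξ U hU hξ 0 1 one_ne_zero
    (fun t ht => by simpa using hDU' t 0 ht.1 le_rfl (by linarith [ht.2])) e0
  have d1 := xi_aux_edge ξ U hU hξ 0 v hv0
    (fun t ht => by simpa using hDU' 0 t le_rfl ht.1 (by linarith [ht.2])) e1
  have d2 := xi_aux_edge ξ U hU hξ 1 (v - 1) hv10
    (fun t ht => by
      have := hDU' (1 - t) t (by linarith [ht.2]) ht.1 (by linarith)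
      convert this using 1
      push_cast; ring) e2
  have hreal := xi_aux_max (deriv ξ) v hvim
    (fun a b ha hb hab => (hξ.deriv hU).differentiableAt (hU.mem_nhds (hDU' a b ha hb hab)))
    (by
      rintro a b ha hb hab (h | h | h)
      · simpa [h] using d1 b ⟨hb, by linarith⟩
      · simpa [h] using d0 a ⟨ha, by linarith⟩
      · have := d2 b ⟨hb, by linarith⟩
        have h' : (a : ℂ) = 1 - b := by rw [eq_sub_iff_add_eq]; exact_mod_cast h
        rw [h']
        convert this using 3
        ring)
  have hrealD : ∀ z ∈ convexHull ℝ {(0 : ℂ), 1, v}, (deriv ξ z).im = 0 := by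
    intro z hz
    obtain ⟨a, b, ha, hb, hab, rfl⟩ := hDinv z hz
    exact hreal a b ha hb hab
  -- integrate from a vertex
  have hint : ∀ p ∈ convexHull ℝ {(0 : ℂ), 1, v}, ξ p = 0 →
      ∀ z ∈ convexHull ℝ {(0 : ℂ), 1, v}, z - p ≠ 0 → (ξ z / (z - p)).im = 0 := by
    intro p hp hp0 z hz hzp
    have hseg : ∀ t ∈ Set.Icc (0 : ℝ) 1, p + t * (z - p) ∈ convexHull ℝ {(0 : ℂ), 1, v} := by
      intro t ht
      have := (convex_convexHull ℝ {(0 : ℂ), 1, v}) hp hz (sub_nonneg.2 ht.2) ht.1 (by ring)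
      convert this using 1
      simp only [Complex.real_smul]; push_cast; ring
    have := xi_aux_int ξ U hU hξ p (z - p) hzp (fun t ht => hDU (hseg t ht)) hp0
      (fun t ht => hrealD _ (hseg t ht))
    simpa using this
  have p0 : (0 : ℂ) ∈ convexHull ℝ {(0 : ℂ), 1, v} := subset_convexHull ℝ _ (by simp)
  have p1 : (1 : ℂ) ∈ convexHull ℝ {(0 : ℂ), 1, v} := subset_convexHull ℝ _ (by simp)
  have pv : v ∈ convexHull ℝ {(0 : ℂ), 1, v} := subset_convexHull ℝ _ (by simp)
  intro z hz
  by_cases hz0 : z = 0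
  · rw [hz0, z0]
  by_cases hz1 : z = 1
  · rw [hz1, z1]
  by_cases hzv : z = v
  · rw [hzv, zv]
  have q0 := hint 0 p0 z0 z hz (sub_ne_zero.2 hz0)
  have q1 := hint 1 p1 z1 z hz (sub_ne_zero.2 hz1)
  have qv := hint v pv zv z hz (sub_ne_zero.2 hzv)
  by_cases him : z.im = 0
  · refine xi_aux_zero _ _ _ (sub_ne_zero.2 hz0) (sub_ne_zero.2 hzv) q0 qv ?_
    have hre : z.re ≠ 0 := fun h => hz0 (Complex.ext h him)
    simp [him, hre, hvim]
  · refine xi_aux_zero _ _ _ (sub_ne_zero.2 hz0) (sub_ne_zero.2 hz1) q0 q1 ?_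
    simp only [Complex.sub_re, Complex.sub_im, Complex.one_re, Complex.one_im,
      Complex.zero_re, Complex.zero_im]
    intro h; apply him; linarith
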